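/- Let A be a CFG-ring and let R be a finitely generated subring of A (i.e., R is the subring generated by a finite subset of A). Then R is finite. -/

import Mathlib

theorem aux_domain (K : Type*) [CommRing K] [IsDomain K] (n : ℕ) (x : Fin n → K)
    (hx : Function.Surjective x) :
    ((n.factorial : ℕ) : K) = 0 ∧ ∀ y : K, y ^ (n.factorial + 1) = y := by
  classical
  haveI : Finite K := Finite.of_surjective x hx
  letI : Field K := (Finite.isField_of_domain K).toField
  letI : Fintype K := Fintype.ofFinite K
  have hcard : Fintype.card K ≤ n := by
    simpa using Fintype.card_le_of_surjective x hx
  have h1 : 1 < Fintype.card K := Fintype.one_lt_card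
  constructor
  · obtain ⟨k, hk⟩ := Nat.dvd_factorial (by omega) hcard
    rw [hk, Nat.cast_mul, Nat.cast_card_eq_zero, zero_mul]
  · intro y
    obtain ⟨k, hk⟩ := Nat.dvd_factorial (m := Fintype.card K - 1) (n := n) (by omega) (by omega)
    by_cases hy : y = 0
    · simp [hy]
    · rw [hk, pow_succ, pow_mul, FiniteField.pow_card_sub_one_eq_one y hy, one_pow, one_mul]

theorem aux_ring (A : Type*) [CommRing A] [IsReduced A]
    (n : ℕ) (x : Fin n → A) (hCFG : ∀ y : A, ∏ i, (y - x i) = 0) :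
    ((n.factorial : ℕ) : A) = 0 ∧ ∀ y : A, y ^ (n.factorial + 1) = y := by
  have key : ∀ P : Ideal A, P.IsPrime → ((n.factorial : ℕ) : A ⧸ P) = 0 ∧
      ∀ y : A ⧸ P, y ^ (n.factorial + 1) = y := by
    intro P hP
    apply aux_domain (A ⧸ P) n (fun i => Ideal.Quotient.mk P (x i))
    intro z
    obtain ⟨y, rfl⟩ := Ideal.Quotient.mk_surjective z
    have h := congrArg (Ideal.Quotient.mk P) (hCFG y)
    rw [map_prod, map_zero, Finset.prod_eq_zero_iff] at h
    obtain ⟨i, -, hi⟩ := h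
    refine ⟨i, ?_⟩
    rw [map_sub, sub_eq_zero] at hi
    exact hi.symm
  constructor
  · refine (nilpotent_iff_mem_prime.2 fun P hP => ?_).eq_zero
    rw [← Ideal.Quotient.eq_zero_iff_mem, map_natCast]
    exact (key P hP).1
  · intro y
    rw [← sub_eq_zero]
    refine (nilpotent_iff_mem_prime.2 fun P hP => ?_).eq_zero
    rw [← Ideal.Quotient.eq_zero_iff_mem, map_sub, map_pow, sub_eq_zero]
    exact (key P hP).2 _

theorem stmt_6 (A : Type*) [CommRing A] [IsReduced A]
    (n : ℕ) (x : Fin n → A) (hCFG : ∀ y : A, ∏ i, (y - x i) = 0)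
    (s : Set A) (hs : s.Finite) :
    ((Subring.closure s : Subring A) : Set A).Finite := by
  obtain ⟨h0, hpow⟩ := aux_ring A n x hCFG
  have hint : ∀ y ∈ s, IsIntegral ℤ y := by
    intro y _
    refine ⟨Polynomial.X ^ (n.factorial + 1) - Polynomial.X, ?_, ?_⟩
    · apply Polynomial.monic_X_pow_sub
      rw [Polynomial.degree_X]
      exact_mod_cast Nat.succ_lt_succ n.factorial_pos
    · simp [hpow y]
  have hfg := fg_adjoin_of_finite hs hint
  haveI : Module.Finite ℤ (Subalgebra.toSubmodule (Algebra.adjoin ℤ s)) :=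
    Module.Finite.iff_fg.2 hfg
  have htor : Module.IsTorsion ℤ (Subalgebra.toSubmodule (Algebra.adjoin ℤ s)) := by
    intro z
    refine ⟨⟨(n.factorial : ℤ), ?_⟩, ?_⟩
    · rw [mem_nonZeroDivisors_iff_ne_zero]
      exact_mod_cast n.factorial_ne_zero
    · apply Subtype.ext
      change (n.factorial : ℤ) • (z : A) = 0
      rw [zsmul_eq_mul]
      simp [h0]
  have hfin : Finite (Subalgebra.toSubmodule (Algebra.adjoin ℤ s)) :=
    Module.finite_of_fg_torsion _ htor
  have hfin' : ((Subalgebra.toSubmodule (Algebra.adjoin ℤ s) : Submodule ℤ A) : Set A).Finite := hfin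
  refine hfin'.subset ?_
  have : Subring.closure s ≤ (Algebra.adjoin ℤ s).toSubring :=
    Subring.closure_le.2 Algebra.subset_adjoin
  exact this
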